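/- Let n ≥ 1 and let j = (j_0, …, j_{n−1}) be a weak composition of binom(n,2), i.e., nonnegative integers with j_0 + ⋯ + j_{n−1} = binom(n,2). Then K_n(j_0 − (n−1), j_1 − (n−2), …, j_{n−2} − 1, j_{n−1}, 0) > 0 if and only if j dominates δ = (n−1, n−2, …, 1, 0), i.e., ∑_{i=0}^{k} j_i ≥ ∑_{i=0}^{k} (n−1−i) for every 0 ≤ k ≤ n−1. -/

import Mathlib

open Finset

/-- The entropy-like function `h(t) = (t+1)·log(t+1) − t·log t` (with `h 0 = 0`
since `Real.log 0 = 0`). -/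
noncomputable def entH (t : ℝ) : ℝ := (t + 1) * Real.log (t + 1) - t * Real.log t

/-- `f` is an integer flow on the complete graph `k_{n+1}` with netflow `N`:
`f i j` is the flow on the edge `(i,j)` for `i < j`, it vanishes for `i ≥ j`,
and the netflow at each vertex `i` is `N i`. -/
def IsIntFlow (n : ℕ) (N : Fin (n + 1) → ℤ) (f : Fin (n + 1) → Fin (n + 1) → ℕ) : Prop :=
  (∀ i j : Fin (n + 1), ¬ i < j → f i j = 0) ∧
  ∀ i : Fin (n + 1),
    (∑ j : Fin (n + 1), if i < j then (f i j : ℤ) else 0) -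
      (∑ k : Fin (n + 1), if k < i then (f k i : ℤ) else 0) = N i

/-- The Kostant partition function: the number of integer flows on the complete
graph `k_{n+1}` with netflow `N`. -/
noncomputable def Kn (n : ℕ) (N : Fin (n + 1) → ℤ) : ℕ :=
  Nat.card {f : Fin (n + 1) → Fin (n + 1) → ℕ // IsIntFlow n N f}

/-- The flow polytope of the complete graph `k_{n+1}` with netflow `N`. -/
def FlowPolytope (n : ℕ) (N : Fin (n + 1) → ℝ) : Set (Fin (n + 1) → Fin (n + 1) → ℝ) :=
  {f | (∀ i j : Fin (n + 1), i < j → 0 ≤ f i j) ∧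
    (∀ i j : Fin (n + 1), ¬ i < j → f i j = 0) ∧
    ∀ i : Fin (n + 1),
      (∑ j : Fin (n + 1), if i < j then f i j else 0) -
        (∑ k : Fin (n + 1), if k < i then f k i else 0) = N i}

/-- The flow entropy `H(f)`. -/
noncomputable def flowEntropy (n : ℕ) (N : Fin (n + 1) → ℝ)
    (f : Fin (n + 1) → Fin (n + 1) → ℝ) : ℝ :=
  (∑ i : Fin (n + 1), ∑ j : Fin (n + 1), if i < j then entH (f i j) else 0) +
  ∑ j : Fin (n + 1), if 0 < (j : ℕ) ∧ (j : ℕ) < n then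
    entH (∑ i : Fin (n + 1), if i < j then (N i - f i j) else 0) else 0

/-- Partial sums `s_k = N_0 + ⋯ + N_k`. -/
def sPartial (n : ℕ) (N : Fin (n + 1) → ℤ) (k : ℕ) : ℤ :=
  ∑ j : Fin (n + 1), if (j : ℕ) ≤ k then N j else 0

/-- Extend `(N_0,…,N_{n−1})` to the netflow vector `(N_0,…,N_{n−1},−∑ N_i)`. -/
def extend (n : ℕ) (N : Fin n → ℤ) : Fin (n + 1) → ℤ := Fin.snoc N (-∑ i, N i)

/-!
Summing the netflow equation over the vertices `≤ k` shows that the netflow of this initial segment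
is the flow across the cut `{≤ k} → {> k}`, which is nonnegative and bounds every edge of the cut.
So there are finitely many flows, and none unless all partial sums of the netflow are nonnegative.
Conversely, if they are, sending the partial sum `s_k` along each edge `(k, k + 1)` is a flow.
Dominance of `δ` by `j` says precisely that the partial sums of `j - δ` are nonnegative.
-/

section Cut

variable {n : ℕ} {N : Fin (n + 1) → ℤ} {f : Fin (n + 1) → Fin (n + 1) → ℕ}

theorem isIntFlow_iff_sum_sub_sum :
    IsIntFlow n N f ↔ (∀ u v, ¬ u < v → f u v = 0) ∧
      ∀ v, ∑ w, (f v w : ℤ) - ∑ u, (f u v : ℤ) = N v := by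
  refine and_congr_right fun hzero => forall_congr' fun v => ?_
  have houtflow : ∀ w, (if v < w then (f v w : ℤ) else 0) = f v w := fun w =>
    ite_eq_left_iff.2 fun h => by rw [hzero v w h, Nat.cast_zero]
  have hinflow : ∀ u, (if u < v then (f u v : ℤ) else 0) = f u v := fun u =>
    ite_eq_left_iff.2 fun h => by rw [hzero u v h, Nat.cast_zero]
  simp only [houtflow, hinflow]

namespace IsIntFlow

theorem sum_netflow (hf : IsIntFlow n N f) (S : Finset (Fin (n + 1))) :
    ∑ v ∈ S, N v =
      ∑ v ∈ S, ∑ w ∈ Sᶜ, (f v w : ℤ) - ∑ v ∈ S, ∑ u ∈ Sᶜ, (f u v : ℤ) := by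
  have hinternal : ∑ v ∈ S, ∑ w ∈ S, (f v w : ℤ) = ∑ v ∈ S, ∑ u ∈ S, (f u v : ℤ) := sum_comm
  simp only [← (isIntFlow_iff_sum_sub_sum.1 hf).2, sum_sub_distrib, ← sum_add_sum_compl S,
    sum_add_distrib, hinternal, add_sub_add_left_eq_sub]

theorem sum_netflow_univ (hf : IsIntFlow n N f) : ∑ v, N v = 0 := by
  simpa only [compl_univ, sum_empty, sum_const_zero, sub_zero] using hf.sum_netflow univ

theorem sum_netflow_Iic (hf : IsIntFlow n N f) (k : Fin (n + 1)) :
    ∑ v ∈ Iic k, N v = ∑ v ∈ Iic k, ∑ w ∈ Ioi k, (f v w : ℤ) := by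
  have hcompl : (Iic k)ᶜ = Ioi k := by ext; simp
  have hbackward : ∑ v ∈ Iic k, ∑ u ∈ Ioi k, (f u v : ℤ) = 0 :=
    sum_eq_zero fun v hv => sum_eq_zero fun u hu => by
      rw [hf.1 u v ((mem_Iic.1 hv).trans (mem_Ioi.1 hu).le).not_gt, Nat.cast_zero]
  rw [hf.sum_netflow, hcompl, hbackward, sub_zero]

theorem sum_netflow_Iic_nonneg (hf : IsIntFlow n N f) (k : Fin (n + 1)) :
    0 ≤ ∑ v ∈ Iic k, N v := by
  rw [hf.sum_netflow_Iic]
  positivity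

theorem le_sum_netflow_Iic (hf : IsIntFlow n N f) (u v : Fin (n + 1)) :
    (f u v : ℤ) ≤ ∑ w ∈ Iic u, N w := by
  by_cases huv : u < v
  · calc (f u v : ℤ)
        ≤ ∑ w ∈ Ioi u, (f u w : ℤ) :=
          single_le_sum (fun w _ => Int.natCast_nonneg (f u w)) (mem_Ioi.2 huv)
      _ ≤ ∑ t ∈ Iic u, ∑ w ∈ Ioi u, (f t w : ℤ) :=
          single_le_sum (f := fun t => ∑ w ∈ Ioi u, (f t w : ℤ)) (fun t _ => by positivity)
            (mem_Iic.2 le_rfl)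
      _ = ∑ w ∈ Iic u, N w := (hf.sum_netflow_Iic u).symm
  · rw [hf.1 u v huv, Nat.cast_zero]
    exact hf.sum_netflow_Iic_nonneg u

end IsIntFlow

theorem finite_setOf_isIntFlow (n : ℕ) (N : Fin (n + 1) → ℤ) : {f | IsIntFlow n N f}.Finite :=
  (Set.finite_Iic fun u _ : Fin (n + 1) => (∑ w ∈ Iic u, N w).toNat).subset fun _ hf u v =>
    Int.toNat_le_toNat (hf.le_sum_netflow_Iic u v)

theorem Kn_pos_iff_exists_isIntFlow : 0 < Kn n N ↔ ∃ f, IsIntFlow n N f := by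
  have : Finite {f // IsIntFlow n N f} := (finite_setOf_isIntFlow n N).to_subtype
  rw [Kn, Finite.card_pos_iff, nonempty_subtype]

end Cut

section PathFlow

variable {n : ℕ}

/-- The flow along the path `0 → 1 → ⋯ → n` that carries `a k` units on the edge `(k, k + 1)`.
Row `k < n` is supported on the single vertex `k + 1`; the last row is zero. -/
def pathFlow (a : Fin n → ℕ) : Fin (n + 1) → Fin (n + 1) → ℕ :=
  Fin.snoc (fun k => Pi.single k.succ (a k)) 0

theorem pathFlow_castSucc (a : Fin n → ℕ) (k : Fin n) :
    pathFlow a k.castSucc = Pi.single k.succ (a k) := by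
  simp [pathFlow]

theorem pathFlow_last (a : Fin n → ℕ) : pathFlow a (Fin.last n) = 0 := by
  simp [pathFlow]

theorem sum_pathFlow_right (a : Fin n → ℕ) (v : Fin (n + 1)) :
    ∑ w, pathFlow a v w = Fin.snoc (α := fun _ => ℕ) a 0 v := by
  cases v using Fin.lastCases <;> simp [pathFlow_castSucc, pathFlow_last]

theorem sum_pathFlow_left (a : Fin n → ℕ) (v : Fin (n + 1)) :
    ∑ u, pathFlow a u v = Fin.cons (α := fun _ => ℕ) 0 a v := by
  rw [Fin.sum_univ_castSucc]
  cases v using Fin.cases <;> simp [pathFlow_castSucc, pathFlow_last, Pi.single_apply]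

theorem isIntFlow_pathFlow (a : Fin n → ℕ) :
    IsIntFlow n (fun v => (Fin.snoc (α := fun _ => ℕ) a 0 v : ℤ) -
      (Fin.cons (α := fun _ => ℕ) 0 a v : ℤ)) (pathFlow a) := by
  refine isIntFlow_iff_sum_sub_sum.2 ⟨fun u v huv => ?_, fun v => ?_⟩
  · cases u using Fin.lastCases with
    | last => rw [pathFlow_last, Pi.zero_apply]
    | cast k =>
      have hne : v ≠ k.succ := fun hv => huv (hv ▸ Fin.castSucc_lt_succ)
      rw [pathFlow_castSucc, Pi.single_eq_of_ne hne]
  · rw [← sum_pathFlow_right, ← sum_pathFlow_left, Nat.cast_sum, Nat.cast_sum]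

theorem exists_isIntFlow_of_sum_Iic_nonneg {N : Fin (n + 1) → ℤ} (hsum : ∑ v, N v = 0)
    (hnonneg : ∀ k, 0 ≤ ∑ v ∈ Iic k, N v) : ∃ f, IsIntFlow n N f := by
  let s (k : Fin n) : ℕ := (∑ v ∈ Iic k.castSucc, N v).toNat
  have hs (k : Fin n) : (s k : ℤ) = ∑ v ∈ Iic k.castSucc, N v := Int.toNat_of_nonneg (hnonneg _)
  have houtflow (v : Fin (n + 1)) :
      (Fin.snoc (α := fun _ => ℕ) s 0 v : ℤ) = ∑ w ∈ Iic v, N w := by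
    cases v using Fin.lastCases with
    | last => rw [Fin.snoc_last, ← Fin.top_eq_last, Iic_top, hsum, Nat.cast_zero]
    | cast k => rw [Fin.snoc_castSucc, hs]
  have hinflow (v : Fin (n + 1)) :
      (Fin.cons (α := fun _ => ℕ) 0 s v : ℤ) = ∑ w ∈ Iio v, N w := by
    cases v using Fin.cases with
    | zero =>
      have hIio : Iio (0 : Fin (n + 1)) = ∅ := Iio_bot
      rw [Fin.cons_zero, hIio, sum_empty, Nat.cast_zero]
    | succ k =>
      have hIio : Iio k.succ = Iic k.castSucc := by ext w; simp [Fin.le_castSucc_iff]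
      rw [Fin.cons_succ, hs, hIio]
  refine ⟨pathFlow s, ?_⟩
  convert isIntFlow_pathFlow s with v
  rw [houtflow, hinflow, ← sum_Iio_add_eq_sum_Iic, add_sub_cancel_left]

end PathFlow

theorem Kn_pos_iff {n : ℕ} {N : Fin (n + 1) → ℤ} :
    0 < Kn n N ↔ ∑ v, N v = 0 ∧ ∀ k, 0 ≤ ∑ v ∈ Iic k, N v := by
  rw [Kn_pos_iff_exists_isIntFlow]
  exact ⟨fun ⟨_, hf⟩ => ⟨hf.sum_netflow_univ, hf.sum_netflow_Iic_nonneg⟩,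
    fun ⟨hsum, hnonneg⟩ => exists_isIntFlow_of_sum_Iic_nonneg hsum hnonneg⟩

theorem sum_extend {n : ℕ} (N : Fin n → ℤ) : ∑ v, extend n N v = 0 := by
  simp [extend, Fin.sum_univ_castSucc]

theorem Kn_extend_pos_iff {n : ℕ} {N : Fin n → ℤ} :
    0 < Kn n (extend n N) ↔ ∀ k, 0 ≤ ∑ i ∈ Iic k, N i := by
  have hlast : ∑ v ∈ Iic (Fin.last n), extend n N v = 0 := by
    rw [← Fin.top_eq_last, Iic_top, sum_extend]
  have hcastSucc (k : Fin n) : ∑ v ∈ Iic k.castSucc, extend n N v = ∑ i ∈ Iic k, N i := by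
    simp only [Fin.sum_Iic_castSucc, extend, Fin.snoc_castSucc]
  simp only [Kn_pos_iff, sum_extend, true_and, Fin.forall_fin_succ', hcastSucc, hlast, le_refl,
    and_true]

theorem Kn_extend_sub_pos_iff {n : ℕ} {a b : Fin n → ℕ} :
    0 < Kn n (extend n fun i => (a i : ℤ) - b i) ↔
      ∀ k, ∑ i ∈ Iic k, b i ≤ ∑ i ∈ Iic k, a i := by
  simp only [Kn_extend_pos_iff, sum_sub_distrib, sub_nonneg, ← Nat.cast_sum, Nat.cast_le]

theorem sum_sub_one_sub_val (n : ℕ) : ∑ i : Fin n, (n - 1 - (i : ℕ)) = n.choose 2 := by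
  rw [Fin.sum_univ_eq_sum_range (fun i => n - 1 - i), sum_range_reflect (fun i => i),
    sum_range_id, Nat.choose_two_right]

/-- **Proposition (positivity in the Lidskii formula).** For a weak composition
`j = (j_0,…,j_{n−1})` of `C(n,2)`, one has `K_n(j − δ, 0) > 0` (where
`δ = (n−1, n−2, …, 1, 0)` and the netflow vector has a final coordinate `0`)
if and only if `j` dominates `δ`. -/
theorem kostant_jminusdelta_pos_iff_dominates (n : ℕ) (hn : 1 ≤ n)
    (j : Fin n → ℕ) (hsum : ∑ i, j i = Nat.choose n 2) :
    0 < Kn n (fun i : Fin (n + 1) =>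
        if h : (i : ℕ) < n then (j ⟨(i : ℕ), h⟩ : ℤ) - ((n : ℤ) - 1 - ((i : ℕ) : ℤ))
        else 0) ↔
      ∀ k : Fin n,
        (∑ i : Fin n, if i ≤ k then (n - 1 - (i : ℕ)) else 0) ≤
          ∑ i : Fin n, if i ≤ k then j i else 0 := by
  have hextend : (fun i : Fin (n + 1) =>
      if h : (i : ℕ) < n then (j ⟨(i : ℕ), h⟩ : ℤ) - ((n : ℤ) - 1 - ((i : ℕ) : ℤ)) else 0) =
      extend n fun i => (j i : ℤ) - (n - 1 - (i : ℕ) : ℕ) := by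
    funext v
    cases v using Fin.lastCases with
    | last =>
      rw [extend, Fin.snoc_last, sum_sub_distrib, ← Nat.cast_sum, ← Nat.cast_sum, hsum,
        sum_sub_one_sub_val]
      simp
    | cast i =>
      have hcast : ((n - 1 - (i : ℕ) : ℕ) : ℤ) = (n : ℤ) - 1 - (i : ℕ) := by omega
      simp [extend, hcast]
  rw [hextend, Kn_extend_sub_pos_iff]
  simp only [← sum_filter, filter_ge_eq_Iic]
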